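/- For every g in C, Σ_{i∈ℤ} ∫_Ω (τ_i g) · W^A_{0,1} dν_β = − Σ_{i∈ℤ} i ∫_Ω (A g) · E_i dν_β, where W^A_{0,1}(ω) = −p₀ V'(r₁), E_i(ω) = p_i²/2 + V(r_i), and in both sums all but finitely many terms vanish. -/

import Mathlib

/-!
Write `E_k = p_k²/2 + V(r_k)` and `J_k = ∫ g · p_k V'(r_{k+1}) dν`. Both sides of the identity are
equal to `-∑ J_k`.

* By shift invariance of `ν` (`integral_tauf`), the `i`-th term on the left is `-J_{-i}`.
* The vector fields `Y_{i,j}` are antisymmetric with respect to `ν`: integrating by parts in `r_j`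
  and in `p_i` against the Gibbs density produces two boundary terms `β ∫ p_i V'(r_j) g E_k dν`,
  which cancel (`CylRep.integral_Yz_mul_energy`). Since `A E_k = p_k V'(r_{k+1}) - p_{k-1} V'(r_k)`,
  this gives `∫ (A g) E_k dν = J_{k-1} - J_k` (`CylRep.integral_Aop_mul_energy`), and a summation by
  parts finishes the computation.
* Finiteness of the sums holds because `J_k = 0` as soon as `g` does not depend on the site `k`:
  the momentum `p_k` is then an independent centred variable
  (`CylRep.integral_current_eq_zero`).

The analytic point is integrability, since `g` has compact support only in its own window while
`E_k` and the currents involve further sites. The bounds on `V''` give `V(r) ≥ δ₋ r²/2`,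
`|V(r)| ≤ δ₊ r²` and `|V'(r)| ≤ δ₊ |r|`, so the density of any finite window decays like a Gaussian
and every continuous local function of polynomial growth (`Nice`) is integrable. Integrals of such
functions against `ν` are rewritten as integrals over a finite-dimensional window
(`Nice.integral_eq`), where integration by parts along a line is available.
-/

open MeasureTheory Real

/-- The configuration space `Ω = (ℝ²)^ℤ` of the infinite chain. -/
abbrev Om : Type := (ℤ → ℝ) × (ℤ → ℝ)

/-- Partial derivative with respect to the momentum `p i`. -/
noncomputable def pdp (i : ℤ) (f : Om → ℝ) (ω : Om) : ℝ :=
  deriv (fun t => f (Function.update ω.1 i t, ω.2)) (ω.1 i)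

/-- Partial derivative with respect to the position variable `r j`. -/
noncomputable def pdr (j : ℤ) (f : Om → ℝ) (ω : Om) : ℝ :=
  deriv (fun t => f (ω.1, Function.update ω.2 j t)) (ω.2 j)

/-- The vector field `Y_{i,j} f = p_i ∂f/∂r_j − V'(r_j) ∂f/∂p_i`. -/
noncomputable def Yz (V : ℝ → ℝ) (i j : ℤ) (f : Om → ℝ) : Om → ℝ :=
  fun ω => ω.1 i * pdr j f ω - deriv V (ω.2 j) * pdp i f ω

/-- The vector field `X_i = Y_{i,i}`. -/
noncomputable def Xz (V : ℝ → ℝ) (i : ℤ) (f : Om → ℝ) : Om → ℝ :=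
  Yz V i i f

/-- The shift of configurations: `(τ_j ω)_i = ω_{i+j}`. -/
def shiftc (j : ℤ) (ω : Om) : Om :=
  (fun i => ω.1 (i + j), fun i => ω.2 (i + j))

/-- The shift on functions: `(τ_j f)(ω) = f(τ_j ω)`. -/
def tauf (j : ℤ) (f : Om → ℝ) : Om → ℝ :=
  fun ω => f (shiftc j ω)

/-- The Liouville operator `A f = Σ_{i∈ℤ} (X_i f − Y_{i,i+1} f)`; for local `f`
all but finitely many terms of the sum vanish. -/
noncomputable def Aop (V : ℝ → ℝ) (f : Om → ℝ) : Om → ℝ :=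
  fun ω => ∑ᶠ i : ℤ, (Xz V i f ω - Yz V i (i + 1) f ω)

/-- Replace the coordinates of `ω` inside the finite window `s` by `x`. -/
def patch (s : Finset ℤ) (x : (s → ℝ) × (s → ℝ)) (ω : Om) : Om :=
  (fun i => if h : i ∈ s then x.1 ⟨i, h⟩ else ω.1 i,
   fun i => if h : i ∈ s then x.2 ⟨i, h⟩ else ω.2 i)

/-- `f` is a smooth local function with compact support and zero `ν`-average:
it depends only on the coordinates in some finite window `s`, is smooth with
compact support as a function of these coordinates, and has mean zero. -/
def IsCyl (ν : Measure Om) (f : Om → ℝ) : Prop :=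
  ∃ s : Finset ℤ,
    (∀ ω ω' : Om, (∀ i ∈ s, ω.1 i = ω'.1 i) → (∀ i ∈ s, ω.2 i = ω'.2 i) →
      f ω = f ω') ∧
    (∀ ω : Om, ContDiff ℝ (⊤ : ℕ∞) (fun x : (s → ℝ) × (s → ℝ) => f (patch s x ω))) ∧
    (∀ ω : Om, HasCompactSupport (fun x : (s → ℝ) × (s → ℝ) => f (patch s x ω))) ∧
    ∫ ω, f ω ∂ν = 0

/-- `ν` is the infinite-volume Gibbs measure `ν_β`: every finite-dimensional
marginal has the product Gibbs density with respect to Lebesgue measure. -/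
def IsGibbs (V : ℝ → ℝ) (β : ℝ) (ν : Measure Om) : Prop :=
  ∀ s : Finset ℤ,
    Measure.map (fun ω : Om => ((fun i : s => ω.1 i), (fun i : s => ω.2 i))) ν =
      volume.withDensity (fun x : (s → ℝ) × (s → ℝ) => ENNReal.ofReal
        (∏ i : s, Real.exp (-β * ((x.1 i) ^ 2 / 2 + V (x.2 i))) /
          (Real.sqrt (2 * Real.pi / β) * ∫ r : ℝ, Real.exp (-β * V r))))

/-! ### Quadratic bounds on the potential -/

/-- The only features of the potential that the proof uses: it is `C¹`, comparable to `r²`, and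
its derivative grows at most linearly. -/
structure QuadPot (V : ℝ → ℝ) (a b : ℝ) : Prop where
  a_pos : 0 < a
  diff : Differentiable ℝ V
  cont_deriv : Continuous (deriv V)
  lower : ∀ r, a * r ^ 2 ≤ V r
  upper : ∀ r, |V r| ≤ b * r ^ 2
  upper_deriv : ∀ r, |deriv V r| ≤ b * |r|

lemma quadPot_of_bounds (V : ℝ → ℝ) (hV : ContDiff ℝ (⊤ : ℕ∞) V) (hV0 : V 0 = 0)
    (hdV0 : deriv V 0 = 0) (δm δp : ℝ) (hδm : 0 < δm)
    (hVpp : ∀ r : ℝ, δm ≤ deriv (deriv V) r ∧ deriv (deriv V) r ≤ δp) :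
    QuadPot V (δm / 2) δp := by
  have hd : Differentiable ℝ V := hV.differentiable (by simp)
  have hV' : ContDiff ℝ (⊤ : ℕ∞) (deriv V) := by
    have := (contDiff_infty_iff_deriv (f := V)).1 (by exact_mod_cast hV)
    exact_mod_cast this.2
  have hd' : Differentiable ℝ (deriv V) := hV'.differentiable (by simp)
  have hub : ∀ r, |deriv V r| ≤ δp * |r| := fun r => by
    have := convex_univ.norm_image_sub_le_of_norm_deriv_le (f := deriv V) (C := δp)
      (fun x _ => hd' x)
      (fun x _ => by
        rw [Real.norm_eq_abs, abs_of_nonneg (hδm.le.trans (hVpp x).1)]; exact (hVpp x).2)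
      (Set.mem_univ 0) (Set.mem_univ r)
    simpa [hdV0] using this
  have hδp : 0 < δp := hδm.trans_le ((hVpp 0).1.trans (hVpp 0).2)
  refine ⟨by positivity, hd, hV'.continuous, fun r => ?_, fun r => ?_, hub⟩
  · set h : ℝ → ℝ := fun r => V r - δm / 2 * r ^ 2 with hh
    have h1 : ∀ r, HasDerivAt h (deriv V r - δm * r) r := fun r => by
      have := (hd r).hasDerivAt.sub (((hasDerivAt_id r).pow 2).const_mul (δm / 2))
      refine this.congr_deriv ?_
      simp; ring
    have h1' : deriv h = fun r => deriv V r - δm * r := funext fun r => (h1 r).deriv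
    have h2 : ∀ r, HasDerivAt (deriv h) (deriv (deriv V) r - δm) r := fun r => by
      rw [h1']
      have := (hd' r).hasDerivAt.sub ((hasDerivAt_id r).const_mul δm)
      refine this.congr_deriv ?_
      simp
    have hmono : Monotone (deriv h) := monotone_of_deriv_nonneg
      (fun r => (h2 r).differentiableAt) (fun r => by rw [(h2 r).deriv]; linarith [(hVpp r).1])
    have hcv : ConvexOn ℝ Set.univ h := hmono.convexOn_univ_of_deriv
      (fun r => (h1 r).differentiableAt)
    have h00 : deriv h 0 = 0 := by rw [h1']; simp [hdV0]
    have hmin : IsMinOn h Set.univ 0 := hcv.isMinOn_of_rightDeriv_eq_zero (by simp) (by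
      refine Eq.trans ?_ h00
      exact ((h1 0).differentiableAt.hasDerivAt.hasDerivWithinAt).derivWithin
        (uniqueDiffWithinAt_Ioi 0))
    have := isMinOn_iff.1 hmin r (Set.mem_univ r)
    simp only [hh, hV0] at this
    linarith
  · have := (convex_closedBall (0 : ℝ) |r|).norm_image_sub_le_of_norm_deriv_le (f := V)
      (C := δp * |r|) (fun x _ => hd x)
      (fun x hx => by
        rw [Real.norm_eq_abs]
        refine (hub x).trans ?_
        have : |x| ≤ |r| := by simpa using hx
        gcongr)
      (x := 0) (y := r) (by simp) (by simp)
    simp only [hV0, sub_zero, Real.norm_eq_abs] at this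
    calc _ ≤ _ := this
      _ = δp * r ^ 2 := by rw [mul_assoc, abs_mul_abs_self]; ring

/-! ### Calculus in a finite window -/

section Window

variable {ι : Type*} [Fintype ι]

/-- The Gibbs density on the finite window `ι`, with one-site normalisation `c`. The value of `c`
plays no role in the computations, so it is left arbitrary. -/
noncomputable def dens (V : ℝ → ℝ) (β c : ℝ) (x : (ι → ℝ) × (ι → ℝ)) : ℝ :=
  ∏ i, Real.exp (-β * ((x.1 i) ^ 2 / 2 + V (x.2 i))) / c

lemma dens_eq (V : ℝ → ℝ) (β c : ℝ) (x : (ι → ℝ) × (ι → ℝ)) :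
    dens V β c x =
      Real.exp (-β * ∑ i, ((x.1 i) ^ 2 / 2 + V (x.2 i))) * ((c ^ Fintype.card ι)⁻¹) := by
  unfold dens
  rw [Finset.prod_div_distrib, Finset.mul_sum, Real.exp_sum, div_eq_mul_inv, Finset.prod_const,
    Finset.card_univ]

lemma continuous_dens {V : ℝ → ℝ} (hV : Continuous V) (β c : ℝ) :
    Continuous (dens (ι := ι) V β c) := by
  unfold dens; fun_prop

lemma dens_hasLineDerivAt {V : ℝ → ℝ} (hV : Differentiable ℝ V) (β c : ℝ)
    (x v : (ι → ℝ) × (ι → ℝ)) :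
    HasLineDerivAt ℝ (dens V β c)
      (-β * (∑ i, (x.1 i * v.1 i + deriv V (x.2 i) * v.2 i)) * dens V β c x) x v := by
  have h1 : ∀ i, HasDerivAt (fun t : ℝ => (x.1 i + t * v.1 i) ^ 2 / 2 + V (x.2 i + t * v.2 i))
      (x.1 i * v.1 i + deriv V (x.2 i) * v.2 i) 0 := fun i => by
    have hp : HasDerivAt (fun t : ℝ => x.1 i + t * v.1 i) (v.1 i) 0 := by
      simpa using ((hasDerivAt_id (0 : ℝ)).mul_const (v.1 i)).const_add (x.1 i)
    have hr : HasDerivAt (fun t : ℝ => x.2 i + t * v.2 i) (v.2 i) 0 := by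
      simpa using ((hasDerivAt_id (0 : ℝ)).mul_const (v.2 i)).const_add (x.2 i)
    have h3 : HasDerivAt V (deriv V (x.2 i)) (x.2 i + 0 * v.2 i) := by
      simpa using (hV (x.2 i)).hasDerivAt
    have := ((hp.pow 2).div_const 2).add (h3.comp (0 : ℝ) hr)
    refine this.congr_deriv ?_
    simp
    ring
  have h2 := (((HasDerivAt.fun_sum (u := Finset.univ) fun i _ => h1 i).const_mul (-β)).exp).mul_const
    ((c ^ Fintype.card ι)⁻¹)
  unfold HasLineDerivAt
  simp only [dens_eq]
  refine h2.congr_deriv ?_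
  simp
  ring

lemma norm_sq_le_sum (x : (ι → ℝ) × (ι → ℝ)) : ‖x‖ ^ 2 ≤ ∑ i, ((x.1 i) ^ 2 + (x.2 i) ^ 2) := by
  have h0 : 0 ≤ ∑ i, ((x.1 i) ^ 2 + (x.2 i) ^ 2) := Finset.sum_nonneg fun i _ => by positivity
  have key : ∀ i, (x.1 i) ^ 2 + (x.2 i) ^ 2 ≤ ∑ i, ((x.1 i) ^ 2 + (x.2 i) ^ 2) := fun i =>
    Finset.single_le_sum (f := fun i => (x.1 i) ^ 2 + (x.2 i) ^ 2)
      (fun i _ => by positivity) (Finset.mem_univ i)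
  rw [← Real.le_sqrt (norm_nonneg _) h0, Prod.norm_def, max_le_iff,
    pi_norm_le_iff_of_nonneg (Real.sqrt_nonneg _), pi_norm_le_iff_of_nonneg (Real.sqrt_nonneg _)]
  constructor <;> intro i <;> rw [Real.norm_eq_abs] <;> apply Real.le_sqrt_of_sq_le <;>
    rw [sq_abs] <;> linarith [key i, sq_nonneg (x.1 i), sq_nonneg (x.2 i)]

lemma pow_mul_exp_bdd (n : ℕ) {c : ℝ} (hc : 0 < c) :
    ∃ K : ℝ, ∀ t : ℝ, 0 ≤ t → (1 + t) ^ n * Real.exp (-c * t ^ 2) ≤ K := by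
  refine ⟨n.factorial * Real.exp (1 + 1 / (4 * c)), fun t ht => ?_⟩
  have h1 := Real.pow_div_factorial_le_exp (1 + t) (by linarith) n
  rw [div_le_iff₀ (by positivity)] at h1
  calc (1 + t) ^ n * Real.exp (-c * t ^ 2)
      ≤ (Real.exp (1 + t) * n.factorial) * Real.exp (-c * t ^ 2) := by gcongr
    _ = n.factorial * Real.exp (1 + t + -c * t ^ 2) := by rw [Real.exp_add (1 + t)]; ring
    _ ≤ _ := by
      refine mul_le_mul_of_nonneg_left (Real.exp_le_exp.2 ?_) (by positivity)
      have : 1 / (4 * c) - t + c * t ^ 2 = (1 - 2 * c * t) ^ 2 / (4 * c) := by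
        field_simp; ring
      have h2 : 0 ≤ (1 - 2 * c * t) ^ 2 / (4 * c) := by positivity
      linarith

instance isAddHaarMeasure_window :
    (volume : Measure ((ι → ℝ) × (ι → ℝ))).IsAddHaarMeasure :=
  Measure.prod.instIsAddHaarMeasure _ _

/-- Continuous functions of polynomial growth are integrable against the Gibbs density, which
decays like a Gaussian. -/
lemma integrable_mul_dens {V : ℝ → ℝ} {a b β : ℝ} (hV : QuadPot V a b) (hβ : 0 < β) (c : ℝ)
    {F : (ι → ℝ) × (ι → ℝ) → ℝ} (hF : Continuous F) {C : ℝ} {n : ℕ}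
    (hb : ∀ x, |F x| ≤ C * (1 + ‖x‖) ^ n) :
    Integrable (fun x => F x * dens V β c x) := by
  set m := min (1 / 2) a with hm
  have hm0 : 0 < m := lt_min (by norm_num) hV.a_pos
  set d := Module.finrank ℝ ((ι → ℝ) × (ι → ℝ)) with hd
  obtain ⟨K, hK⟩ := pow_mul_exp_bdd (n + (d + 1)) (mul_pos hβ hm0)
  have hC : 0 ≤ C := by
    have := (abs_nonneg _).trans (hb 0)
    simpa using this
  have hint : Integrable (fun x : (ι → ℝ) × (ι → ℝ) =>
      (C * K * |(c ^ Fintype.card ι)⁻¹|) * (1 + ‖x‖) ^ (-((d + 1 : ℕ) : ℝ))) :=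
    (integrable_one_add_norm (by rw [← hd]; push_cast; linarith)).const_mul _
  refine hint.mono' ((hF.mul (continuous_dens hV.diff.continuous β c)).aestronglyMeasurable)
    (Filter.Eventually.of_forall fun x => ?_)
  have h1 : m * ‖x‖ ^ 2 ≤ ∑ i, ((x.1 i) ^ 2 / 2 + V (x.2 i)) := by
    refine (mul_le_mul_of_nonneg_left (norm_sq_le_sum x) hm0.le).trans ?_
    rw [Finset.mul_sum]
    refine Finset.sum_le_sum fun i _ => ?_
    have h2 := hV.lower (x.2 i)
    have h3 : m * x.2 i ^ 2 ≤ a * x.2 i ^ 2 :=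
      mul_le_mul_of_nonneg_right (min_le_right _ _) (sq_nonneg _)
    have h4 : m * x.1 i ^ 2 ≤ 1 / 2 * x.1 i ^ 2 :=
      mul_le_mul_of_nonneg_right (min_le_left _ _) (sq_nonneg _)
    linarith
  have h5 : Real.exp (-β * ∑ i, ((x.1 i) ^ 2 / 2 + V (x.2 i))) ≤
      Real.exp (-(β * m) * ‖x‖ ^ 2) := by
    rw [Real.exp_le_exp]
    have := mul_le_mul_of_nonneg_left h1 hβ.le
    linarith
  have hpos : 0 < 1 + ‖x‖ := by positivity
  rw [Real.norm_eq_abs, abs_mul, dens_eq, abs_mul, abs_of_pos (Real.exp_pos _),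
    Real.rpow_neg hpos.le, Real.rpow_natCast]
  have h6 : (1 + ‖x‖) ^ n * Real.exp (-(β * m) * ‖x‖ ^ 2) ≤ K * ((1 + ‖x‖) ^ (d + 1))⁻¹ := by
    rw [← div_eq_mul_inv, le_div_iff₀ (by positivity)]
    have := hK ‖x‖ (norm_nonneg _)
    rw [pow_add] at this
    linarith
  calc |F x| * (Real.exp (-β * ∑ i, ((x.1 i) ^ 2 / 2 + V (x.2 i))) * |(c ^ Fintype.card ι)⁻¹|)
      ≤ (C * (1 + ‖x‖) ^ n) * (Real.exp (-(β * m) * ‖x‖ ^ 2) * |(c ^ Fintype.card ι)⁻¹|) := by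
        gcongr
        exact hb x
    _ = C * |(c ^ Fintype.card ι)⁻¹| * ((1 + ‖x‖) ^ n * Real.exp (-(β * m) * ‖x‖ ^ 2)) := by ring
    _ ≤ C * |(c ^ Fintype.card ι)⁻¹| * (K * ((1 + ‖x‖) ^ (d + 1))⁻¹) := by gcongr
    _ = _ := by ring

/-- Integration by parts against the Gibbs density in an arbitrary constant direction `v`. -/
lemma window_ibp {V : ℝ → ℝ} {a b β : ℝ} (hV : QuadPot V a b) (c : ℝ)
    {F F' : (ι → ℝ) × (ι → ℝ) → ℝ} (v : (ι → ℝ) × (ι → ℝ))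
    (hFi : Integrable (fun x => F x * dens V β c x))
    (hF'i : Integrable (fun x => F' x * dens V β c x))
    (hFv : Integrable (fun x =>
      ((∑ i, (x.1 i * v.1 i + deriv V (x.2 i) * v.2 i)) * F x) * dens V β c x))
    (hF : ∀ x, HasLineDerivAt ℝ F (F' x) x v) :
    ∫ x, F' x * dens V β c x =
      β * ∫ x, ((∑ i, (x.1 i * v.1 i + deriv V (x.2 i) * v.2 i)) * F x) * dens V β c x := by
  have := integral_bilinear_hasLineDerivAt_right_eq_neg_left_of_integrable
    (μ := (volume : Measure ((ι → ℝ) × (ι → ℝ)))) (B := ContinuousLinearMap.mul ℝ ℝ)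
    (f := F) (f' := F') (g := dens V β c)
    (g' := fun x => -β * (∑ i, (x.1 i * v.1 i + deriv V (x.2 i) * v.2 i)) * dens V β c x) (v := v)
    (by simpa using hF'i)
    (by
      refine (hFv.const_mul (-β)).congr (Filter.Eventually.of_forall fun x => ?_)
      simp only [ContinuousLinearMap.mul_apply']
      ring)
    (by simpa using hFi) (fun x _ => hF x)
    (fun x _ => dens_hasLineDerivAt hV.diff β c x v)
  simp only [ContinuousLinearMap.mul_apply'] at this
  rw [eq_comm, neg_eq_iff_eq_neg] at this
  rw [this, ← integral_neg, ← integral_const_mul]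
  refine integral_congr_ae (Filter.Eventually.of_forall fun x => ?_)
  simp only
  ring

end Window

/-! ### Local observables of polynomial growth -/

/-- Restriction of a configuration to the window `s`. -/
def res (s : Finset ℤ) (ω : Om) : (s → ℝ) × (s → ℝ) :=
  (fun i => ω.1 i, fun i => ω.2 i)

/-- Extension by zero of a configuration in the window `s`. -/
def emb (s : Finset ℤ) (x : (s → ℝ) × (s → ℝ)) : Om := patch s x 0

lemma res_emb (s : Finset ℤ) (x : (s → ℝ) × (s → ℝ)) : res s (emb s x) = x := by
  ext i <;> simp [res, emb, patch]

lemma continuous_emb (s : Finset ℤ) : Continuous (emb s) := by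
  refine Continuous.prodMk ?_ ?_ <;> refine continuous_pi fun i => ?_ <;> by_cases h : i ∈ s <;>
    simp only [h, dif_pos, dif_neg, not_false_eq_true] <;> fun_prop

lemma continuous_res (s : Finset ℤ) : Continuous (res s) := by
  unfold res; fun_prop

lemma measurable_res (s : Finset ℤ) : Measurable (res s) := by
  unfold res; fun_prop

/-- Observables depending only on the window `s`, continuous and of polynomial growth. These form
an algebra, are integrable for the Gibbs measure, and integration by parts is legitimate for
them. -/
structure Nice (s : Finset ℤ) (F : Om → ℝ) : Prop where
  loc : ∀ ω ω' : Om, res s ω = res s ω' → F ω = F ω'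
  cont : Continuous F
  growth : ∃ (C : ℝ) (n : ℕ), ∀ ω, |F ω| ≤ C * (1 + ‖res s ω‖) ^ n

namespace Nice

variable {s : Finset ℤ} {F G : Om → ℝ}

lemma emb_res (hF : Nice s F) (ω : Om) : F (emb s (res s ω)) = F ω :=
  hF.loc _ _ (res_emb s _)

lemma mul (hF : Nice s F) (hG : Nice s G) : Nice s (fun ω => F ω * G ω) := by
  obtain ⟨C, n, h⟩ := hF.growth
  obtain ⟨D, m, h'⟩ := hG.growth
  refine ⟨fun ω ω' e => by rw [hF.loc _ _ e, hG.loc _ _ e], hF.cont.mul hG.cont,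
    C * D, n + m, fun ω => ?_⟩
  rw [abs_mul]
  calc |F ω| * |G ω| ≤ (C * (1 + ‖res s ω‖) ^ n) * (D * (1 + ‖res s ω‖) ^ m) :=
        mul_le_mul (h ω) (h' ω) (abs_nonneg _) ((abs_nonneg _).trans (h ω))
    _ = _ := by ring

lemma add (hF : Nice s F) (hG : Nice s G) : Nice s (fun ω => F ω + G ω) := by
  obtain ⟨C, n, h⟩ := hF.growth
  obtain ⟨D, m, h'⟩ := hG.growth
  refine ⟨fun ω ω' e => by rw [hF.loc _ _ e, hG.loc _ _ e], hF.cont.add hG.cont,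
    |C| + |D|, n + m, fun ω => ?_⟩
  have h1 : (1 : ℝ) ≤ 1 + ‖res s ω‖ := by linarith [norm_nonneg (res s ω)]
  calc |F ω + G ω| ≤ |F ω| + |G ω| := abs_add_le _ _
    _ ≤ |C| * (1 + ‖res s ω‖) ^ n + |D| * (1 + ‖res s ω‖) ^ m := by
        gcongr
        · exact (h ω).trans (by gcongr; exact le_abs_self _)
        · exact (h' ω).trans (by gcongr; exact le_abs_self _)
    _ ≤ |C| * (1 + ‖res s ω‖) ^ (n + m) + |D| * (1 + ‖res s ω‖) ^ (n + m) := by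
        gcongr <;> first | exact h1 | omega
    _ = _ := by ring

lemma const (c : ℝ) : Nice s (fun _ => c) :=
  ⟨fun _ _ _ => rfl, continuous_const, |c|, 0, fun _ => by simp⟩

lemma neg (hF : Nice s F) : Nice s (fun ω => -F ω) := by
  simpa using (const (-1)).mul hF

lemma sub (hF : Nice s F) (hG : Nice s G) : Nice s (fun ω => F ω - G ω) := by
  simpa [sub_eq_add_neg] using hF.add hG.neg

lemma sum {α : Type*} (t : Finset α) {f : α → Om → ℝ} (h : ∀ a ∈ t, Nice s (f a)) :
    Nice s (fun ω => ∑ a ∈ t, f a ω) := by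
  classical
  induction t using Finset.induction_on with
  | empty => simpa using const (s := s) 0
  | insert a t ha ih =>
    simp only [Finset.sum_insert ha]
    exact (h a (by simp)).add (ih fun b hb => h b (by simp [hb]))

lemma mom {i : ℤ} (hi : i ∈ s) : Nice s (fun ω => ω.1 i) := by
  refine ⟨fun ω ω' e => congrFun (congrArg Prod.fst e) ⟨i, hi⟩, by fun_prop, 1, 1, fun ω => ?_⟩
  have h1 : |ω.1 i| ≤ ‖(res s ω).1‖ := norm_le_pi_norm (res s ω).1 ⟨i, hi⟩
  have h2 := norm_fst_le (res s ω)
  linarith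

lemma pos {i : ℤ} (hi : i ∈ s) : Nice s (fun ω => ω.2 i) := by
  refine ⟨fun ω ω' e => congrFun (congrArg Prod.snd e) ⟨i, hi⟩, by fun_prop, 1, 1, fun ω => ?_⟩
  have h1 : |ω.2 i| ≤ ‖(res s ω).2‖ := norm_le_pi_norm (res s ω).2 ⟨i, hi⟩
  have h2 := norm_snd_le (res s ω)
  linarith

lemma of_abs_le (hG : Nice s G) (hloc : ∀ ω ω' : Om, res s ω = res s ω' → F ω = F ω')
    (hc : Continuous F) (h : ∀ ω, |F ω| ≤ G ω) : Nice s F := by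
  obtain ⟨C, n, hb⟩ := hG.growth
  exact ⟨hloc, hc, C, n, fun ω => (h ω).trans ((le_abs_self _).trans (hb ω))⟩

variable {V : ℝ → ℝ} {a b : ℝ}

lemma pot (hV : QuadPot V a b) {i : ℤ} (hi : i ∈ s) : Nice s (fun ω => V (ω.2 i)) :=
  of_abs_le ((const b).mul ((pos hi).mul (pos hi)))
    (fun ω ω' e => congrArg V ((pos hi).loc ω ω' e))
    (hV.diff.continuous.comp (by fun_prop))
    (fun ω => by have := hV.upper (ω.2 i); rwa [pow_two] at this)

lemma force (hV : QuadPot V a b) {i : ℤ} (hi : i ∈ s) : Nice s (fun ω => deriv V (ω.2 i)) := by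
  have hb : 0 ≤ b := by
    have := (abs_nonneg _).trans (hV.upper_deriv 1)
    simpa using this
  refine of_abs_le ((const b).mul ((const 1).add ((pos hi).mul (pos hi))))
    (fun ω ω' e => congrArg (deriv V) ((pos hi).loc ω ω' e))
    (hV.cont_deriv.comp (by fun_prop))
    (fun ω => (hV.upper_deriv (ω.2 i)).trans (mul_le_mul_of_nonneg_left ?_ hb))
  rw [← abs_mul_abs_self (ω.2 i)]
  nlinarith [sq_nonneg (|ω.2 i| - 1), sq_nonneg (|ω.2 i|)]

lemma energy (hV : QuadPot V a b) {i : ℤ} (hi : i ∈ s) :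
    Nice s (fun ω => (ω.1 i) ^ 2 / 2 + V (ω.2 i)) := by
  have := (((mom hi).mul (mom hi)).mul (const (1 / 2))).add (pot hV hi)
  refine (funext fun ω => ?_ : (fun ω : Om => (ω.1 i) ^ 2 / 2 + V (ω.2 i)) = _) ▸ this
  ring

/-- A bounded continuous function of a smaller window. -/
lemma of_bounded {t : Finset ℤ} (hts : t ⊆ s) {H : (t → ℝ) × (t → ℝ) → ℝ} (hc : Continuous H)
    {C : ℝ} (hC : ∀ x, |H x| ≤ C) : Nice s (fun ω => H (res t ω)) := by
  refine ⟨fun ω ω' e => congrArg H ?_, hc.comp (continuous_res t), C, 0, fun ω => by simpa using hC _⟩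
  ext i
  · exact congrFun (congrArg Prod.fst e) ⟨i, hts i.2⟩
  · exact congrFun (congrArg Prod.snd e) ⟨i, hts i.2⟩

end Nice

/-! ### Integration against the Gibbs measure -/

/-- The one-site normalisation constant. -/
noncomputable def zc (V : ℝ → ℝ) (β : ℝ) : ℝ :=
  Real.sqrt (2 * Real.pi / β) * ∫ r : ℝ, Real.exp (-β * V r)

section Gibbs

variable {V : ℝ → ℝ} {a b β : ℝ} {ν : Measure Om} {s : Finset ℤ} {F F' : Om → ℝ}

lemma dens_zc_nonneg (x : (s → ℝ) × (s → ℝ)) : 0 ≤ dens V β (zc V β) x := by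
  refine Finset.prod_nonneg fun i _ => div_nonneg (Real.exp_pos _).le ?_
  exact mul_nonneg (Real.sqrt_nonneg _) (integral_nonneg fun r => (Real.exp_pos _).le)

lemma Nice.integrable_window (hF : Nice s F) (hV : QuadPot V a b) (hβ : 0 < β) :
    Integrable (fun x => F (emb s x) * dens V β (zc V β) x) := by
  obtain ⟨C, n, h⟩ := hF.growth
  refine integrable_mul_dens hV hβ _ (hF.cont.comp (continuous_emb s)) (C := C) (n := n)
    fun x => ?_
  have := h (emb s x)
  rwa [res_emb] at this

lemma IsGibbs.map_res (hν : IsGibbs V β ν) (s : Finset ℤ) :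
    Measure.map (res s) ν =
      volume.withDensity (fun x => ENNReal.ofReal (dens V β (zc V β) x)) := hν s

lemma Nice.integral_eq (hF : Nice s F) (hV : QuadPot V a b) (hν : IsGibbs V β ν) :
    ∫ ω, F ω ∂ν = ∫ x, F (emb s x) * dens V β (zc V β) x := by
  have hc : Continuous fun x => F (emb s x) := hF.cont.comp (continuous_emb s)
  have hd := (continuous_dens (ι := s) hV.diff.continuous β (zc V β)).measurable
  calc ∫ ω, F ω ∂ν = ∫ ω, F (emb s (res s ω)) ∂ν := by simp only [hF.emb_res]
    _ = ∫ x, F (emb s x) ∂(Measure.map (res s) ν) :=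
        (integral_map (measurable_res s).aemeasurable hc.aestronglyMeasurable).symm
    _ = _ := by
        rw [hν.map_res, integral_withDensity_eq_integral_toReal_smul hd.ennreal_ofReal
          (Filter.Eventually.of_forall fun x => ENNReal.ofReal_lt_top)]
        refine integral_congr_ae (Filter.Eventually.of_forall fun x => ?_)
        simp [ENNReal.toReal_ofReal (dens_zc_nonneg x), mul_comm]

lemma Nice.integrable (hF : Nice s F) (hV : QuadPot V a b) (hβ : 0 < β) (hν : IsGibbs V β ν) :
    Integrable F ν := by
  have hc : Continuous fun x => F (emb s x) := hF.cont.comp (continuous_emb s)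
  have hd := (continuous_dens (ι := s) hV.diff.continuous β (zc V β)).measurable
  have h1 : Integrable (fun x => F (emb s x)) (Measure.map (res s) ν) := by
    rw [hν.map_res, integrable_withDensity_iff_integrable_smul' hd.ennreal_ofReal
      (Filter.Eventually.of_forall fun x => ENNReal.ofReal_lt_top)]
    refine (hF.integrable_window hV hβ).congr (Filter.Eventually.of_forall fun x => ?_)
    simp [ENNReal.toReal_ofReal (dens_zc_nonneg x), mul_comm]
  have h2 := h1.comp_measurable (measurable_res s)
  refine h2.congr (Filter.Eventually.of_forall fun ω => ?_)
  exact hF.emb_res ω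

/-- Gaussian integration by parts in a momentum: `∫ ∂F/∂p_i dν = β ∫ p_i F dν`. -/
lemma ibp_mom (hV : QuadPot V a b) (hβ : 0 < β) (hν : IsGibbs V β ν) {i : ℤ} (hi : i ∈ s)
    (hF : Nice s F) (hF' : Nice s F')
    (h : ∀ ω : Om, HasDerivAt (fun t => F (Function.update ω.1 i t, ω.2)) (F' ω) (ω.1 i)) :
    ∫ ω, F' ω ∂ν = β * ∫ ω, ω.1 i * F ω ∂ν := by
  have hpF := (Nice.mom hi).mul hF
  rw [hF'.integral_eq hV hν, hpF.integral_eq hV hν]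
  have hsum : ∀ x : (s → ℝ) × (s → ℝ), ∑ k, (x.1 k * (Pi.single (⟨i, hi⟩ : s) (1 : ℝ) : s → ℝ) k +
      deriv V (x.2 k) * (0 : s → ℝ) k) = (emb s x).1 i := fun x => by
    simp [Pi.single_apply, emb, patch, hi]
  have := window_ibp (F := fun x => F (emb s x)) (F' := fun x => F' (emb s x)) hV (zc V β)
    (Pi.single (⟨i, hi⟩ : s) 1, 0) (hF.integrable_window hV hβ) (hF'.integrable_window hV hβ)
    (by simp only [hsum]; exact hpF.integrable_window hV hβ)
    (fun x => by
      have h1 := h (emb s x)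
      have h2 : HasDerivAt (fun t : ℝ => (emb s x).1 i + t) 1 0 := by
        simpa using (hasDerivAt_id (0 : ℝ)).const_add ((emb s x).1 i)
      have h3 := HasDerivAt.comp (0 : ℝ) (by simpa using h1) h2
      rw [mul_one] at h3
      refine h3.congr_of_eventuallyEq (Filter.Eventually.of_forall fun t => ?_)
      refine hF.loc _ _ ?_
      rw [res_emb]
      ext k
      · by_cases hk : (k : ℤ) = i
        · obtain rfl : k = ⟨i, hi⟩ := Subtype.ext hk
          simp [res, emb, patch, hi]
        · have hk' : k ≠ ⟨i, hi⟩ := fun e => hk (congrArg Subtype.val e)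
          simp [res, emb, patch, hk, hk']
      · simp [res, emb, patch])
  simpa only [hsum] using this

/-- Integration by parts in a position: `∫ ∂F/∂r_j dν = β ∫ V'(r_j) F dν`. -/
lemma ibp_pos (hV : QuadPot V a b) (hβ : 0 < β) (hν : IsGibbs V β ν) {i : ℤ} (hi : i ∈ s)
    (hF : Nice s F) (hF' : Nice s F')
    (h : ∀ ω : Om, HasDerivAt (fun t => F (ω.1, Function.update ω.2 i t)) (F' ω) (ω.2 i)) :
    ∫ ω, F' ω ∂ν = β * ∫ ω, deriv V (ω.2 i) * F ω ∂ν := by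
  have hpF := (Nice.force hV hi).mul hF
  rw [hF'.integral_eq hV hν, hpF.integral_eq hV hν]
  have hsum : ∀ x : (s → ℝ) × (s → ℝ), ∑ k, (x.1 k * (0 : s → ℝ) k +
      deriv V (x.2 k) * (Pi.single (⟨i, hi⟩ : s) (1 : ℝ) : s → ℝ) k) =
        deriv V ((emb s x).2 i) := fun x => by
    simp [Pi.single_apply, emb, patch, hi]
  have := window_ibp (F := fun x => F (emb s x)) (F' := fun x => F' (emb s x)) hV (zc V β)
    (0, Pi.single (⟨i, hi⟩ : s) 1) (hF.integrable_window hV hβ) (hF'.integrable_window hV hβ)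
    (by simp only [hsum]; exact hpF.integrable_window hV hβ)
    (fun x => by
      have h1 := h (emb s x)
      have h2 : HasDerivAt (fun t : ℝ => (emb s x).2 i + t) 1 0 := by
        simpa using (hasDerivAt_id (0 : ℝ)).const_add ((emb s x).2 i)
      have h3 := HasDerivAt.comp (0 : ℝ) (by simpa using h1) h2
      rw [mul_one] at h3
      refine h3.congr_of_eventuallyEq (Filter.Eventually.of_forall fun t => ?_)
      refine hF.loc _ _ ?_
      rw [res_emb]
      ext k
      · simp [res, emb, patch]
      · by_cases hk : (k : ℤ) = i
        · obtain rfl : k = ⟨i, hi⟩ := Subtype.ext hk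
          simp [res, emb, patch, hi]
        · have hk' : k ≠ ⟨i, hi⟩ := fun e => hk (congrArg Subtype.val e)
          simp [res, emb, patch, hk, hk'])
  simpa only [hsum] using this

/-- The Gibbs measure is shift invariant; only local observables are needed here. -/
lemma integral_tauf (hV : QuadPot V a b) (hν : IsGibbs V β ν) (hF : Nice s F) (j : ℤ) :
    ∫ ω, tauf j F ω ∂ν = ∫ ω, F ω ∂ν := by
  set t : Finset ℤ := s.map (Equiv.addRight j).toEmbedding with ht
  let e : s ≃ t := (Equiv.addRight j).subtypeEquiv (fun k => by simp [ht])
  have he : ∀ k : s, ((e k : t) : ℤ) = k + j := fun k => rfl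
  let Φ : ((t → ℝ) × (t → ℝ)) → ((s → ℝ) × (s → ℝ)) := fun x => (x.1 ∘ e, x.2 ∘ e)
  have hres : ∀ ω, res s (shiftc j ω) = Φ (res t ω) := fun ω => by
    ext k <;> simp [res, shiftc, Φ, he]
  have hΦc : Continuous Φ := by fun_prop
  have hΦn : ∀ x, ‖Φ x‖ ≤ ‖x‖ := fun x => by
    rw [Prod.norm_def, max_le_iff, pi_norm_le_iff_of_nonneg (norm_nonneg _),
      pi_norm_le_iff_of_nonneg (norm_nonneg _)]
    exact ⟨fun k => (norm_le_pi_norm x.1 (e k)).trans (norm_fst_le x),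
      fun k => (norm_le_pi_norm x.2 (e k)).trans (norm_snd_le x)⟩
  have hN : Nice t (tauf j F) := by
    obtain ⟨C, n, h⟩ := hF.growth
    have hC : 0 ≤ C := by
      have h0 := (abs_nonneg _).trans (h (emb s 0))
      rw [res_emb] at h0
      simpa using h0
    refine ⟨fun ω ω' eq => hF.loc _ _ (by rw [hres, hres, eq]), hF.cont.comp ?_, C, n, fun ω => ?_⟩
    · unfold shiftc; fun_prop
    · refine (h (shiftc j ω)).trans ?_
      rw [hres]
      gcongr
      exact hΦn _
  rw [hN.integral_eq hV hν, hF.integral_eq hV hν]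
  have hm1 := volume_measurePreserving_piCongrLeft (fun _ : s => ℝ) e.symm
  have hm : MeasurePreserving (MeasurableEquiv.prodCongr
      (MeasurableEquiv.piCongrLeft (fun _ : s => ℝ) e.symm)
      (MeasurableEquiv.piCongrLeft (fun _ : s => ℝ) e.symm)) volume volume := hm1.prod hm1
  have hΦ : ∀ x, MeasurableEquiv.prodCongr
      (MeasurableEquiv.piCongrLeft (fun _ : s => ℝ) e.symm)
      (MeasurableEquiv.piCongrLeft (fun _ : s => ℝ) e.symm) x = Φ x := fun x => by
    ext k <;> obtain ⟨k, rfl⟩ := e.symm.surjective k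
    · simp only [Φ, Function.comp_apply, Equiv.apply_symm_apply]
      exact Equiv.piCongrLeft_apply_apply (P := fun _ : s => ℝ) e.symm x.1 k
    · simp only [Φ, Function.comp_apply, Equiv.apply_symm_apply]
      exact Equiv.piCongrLeft_apply_apply (P := fun _ : s => ℝ) e.symm x.2 k
  rw [← hm.integral_comp' (g := fun x => F (emb s x) * dens V β (zc V β) x)]
  refine integral_congr_ae (Filter.Eventually.of_forall fun x => ?_)
  simp only [hΦ]
  congr 1
  · refine hF.loc _ _ ?_
    rw [hres, res_emb, res_emb]
  · exact (Fintype.prod_equiv e _ _ fun k => rfl).symm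

end Gibbs

/-! ### Cylinder functions and antisymmetry of the vector fields -/

/-- `g` is represented in the window `s` by a `C¹` function `G`, bounded together with its
derivative. -/
structure CylRep (s : Finset ℤ) (g : Om → ℝ) (G : (s → ℝ) × (s → ℝ) → ℝ) : Prop where
  rep : ∀ ω, g ω = G (res s ω)
  smooth : ContDiff ℝ 1 G
  bdd : ∃ C, ∀ x, |G x| ≤ C
  bdd_fderiv : ∃ C, ∀ x, ‖fderiv ℝ G x‖ ≤ C

lemma IsCyl.exists_rep {ν : Measure Om} {g : Om → ℝ} (hg : IsCyl ν g) :
    ∃ (s : Finset ℤ) (G : (s → ℝ) × (s → ℝ) → ℝ), CylRep s g G := by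
  obtain ⟨s, hloc, hsm, hcs, -⟩ := hg
  have hG1 : ContDiff ℝ 1 (fun x => g (patch s x 0)) := (hsm 0).of_le (by exact_mod_cast le_top)
  refine ⟨s, fun x => g (patch s x 0), fun ω => ?_, hG1, ?_, ?_⟩
  · refine hloc _ _ ?_ ?_ <;> intro i hi <;> simp [patch, res, hi]
  · exact hG1.continuous.bounded_above_of_compact_support (hcs 0)
  · exact (hG1.continuous_fderiv (by simp)).bounded_above_of_compact_support
      ((hcs 0).fderiv ℝ)

/-- The indicator of the site `i` inside the window `s`; it vanishes when `i ∉ s`. -/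
def site (s : Finset ℤ) (i : ℤ) : s → ℝ := fun k => if (k : ℤ) = i then 1 else 0

lemma site_eq_zero {s : Finset ℤ} {i : ℤ} (hi : i ∉ s) : site s i = 0 := by
  ext k
  have : (k : ℤ) ≠ i := fun e => hi (e ▸ k.2)
  simp [site, this]

namespace CylRep

variable {s t : Finset ℤ} {g : Om → ℝ} {G : (s → ℝ) × (s → ℝ) → ℝ}

lemma hasDerivAt_mom (h : CylRep s g G) (i : ℤ) (ω : Om) :
    HasDerivAt (fun t => g (Function.update ω.1 i t, ω.2))
      (fderiv ℝ G (res s ω) (site s i, 0)) (ω.1 i) := by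
  have h1 : HasFDerivAt G (fderiv ℝ G (res s ω))
      (res s ω + (ω.1 i - ω.1 i) • ((site s i, 0) : (s → ℝ) × (s → ℝ))) := by
    simpa using (h.smooth.differentiable (by simp) (res s ω)).hasFDerivAt
  have h2 : HasDerivAt (fun t : ℝ => res s ω + (t - ω.1 i) • ((site s i, 0) : (s → ℝ) × (s → ℝ)))
      (site s i, 0) (ω.1 i) := by
    simpa using (((hasDerivAt_id (ω.1 i)).sub_const (ω.1 i)).smul_const
      ((site s i, 0) : (s → ℝ) × (s → ℝ))).const_add (res s ω)
  refine (h1.comp_hasDerivAt _ h2).congr_of_eventuallyEq (Filter.Eventually.of_forall fun t => ?_)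
  simp only [h.rep, Function.comp_apply]
  congr 1
  ext k
  · by_cases hk : (k : ℤ) = i
    · simp [res, site, hk]
    · simp [res, site, hk]
  · simp [res]

lemma hasDerivAt_pos (h : CylRep s g G) (i : ℤ) (ω : Om) :
    HasDerivAt (fun t => g (ω.1, Function.update ω.2 i t))
      (fderiv ℝ G (res s ω) (0, site s i)) (ω.2 i) := by
  have h1 : HasFDerivAt G (fderiv ℝ G (res s ω))
      (res s ω + (ω.2 i - ω.2 i) • ((0, site s i) : (s → ℝ) × (s → ℝ))) := by
    simpa using (h.smooth.differentiable (by simp) (res s ω)).hasFDerivAt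
  have h2 : HasDerivAt (fun t : ℝ => res s ω + (t - ω.2 i) • ((0, site s i) : (s → ℝ) × (s → ℝ)))
      (0, site s i) (ω.2 i) := by
    simpa using (((hasDerivAt_id (ω.2 i)).sub_const (ω.2 i)).smul_const
      ((0, site s i) : (s → ℝ) × (s → ℝ))).const_add (res s ω)
  refine (h1.comp_hasDerivAt _ h2).congr_of_eventuallyEq (Filter.Eventually.of_forall fun t => ?_)
  simp only [h.rep, Function.comp_apply]
  congr 1
  ext k
  · simp [res]
  · by_cases hk : (k : ℤ) = i
    · simp [res, site, hk]
    · simp [res, site, hk]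

lemma pdp_eq (h : CylRep s g G) (i : ℤ) (ω : Om) :
    pdp i g ω = fderiv ℝ G (res s ω) (site s i, 0) := (h.hasDerivAt_mom i ω).deriv

lemma pdr_eq (h : CylRep s g G) (i : ℤ) (ω : Om) :
    pdr i g ω = fderiv ℝ G (res s ω) (0, site s i) := (h.hasDerivAt_pos i ω).deriv

lemma pdp_eq_zero (h : CylRep s g G) {i : ℤ} (hi : i ∉ s) (ω : Om) : pdp i g ω = 0 := by
  rw [h.pdp_eq, site_eq_zero hi]; exact map_zero _

lemma pdr_eq_zero (h : CylRep s g G) {i : ℤ} (hi : i ∉ s) (ω : Om) : pdr i g ω = 0 := by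
  rw [h.pdr_eq, site_eq_zero hi]; exact map_zero _

lemma nice (h : CylRep s g G) (hst : s ⊆ t) : Nice t g := by
  obtain ⟨C, hC⟩ := h.bdd
  rw [show g = fun ω => G (res s ω) from funext h.rep]
  exact Nice.of_bounded hst h.smooth.continuous hC

lemma nice_fderiv (h : CylRep s g G) (hst : s ⊆ t) (v : (s → ℝ) × (s → ℝ)) :
    Nice t (fun ω => fderiv ℝ G (res s ω) v) := by
  obtain ⟨C, hC⟩ := h.bdd_fderiv
  refine Nice.of_bounded hst (H := fun x => fderiv ℝ G x v)
    ((h.smooth.continuous_fderiv (by simp)).clm_apply continuous_const) (C := C * ‖v‖) fun x => ?_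
  exact ((fderiv ℝ G x).le_opNorm v).trans (by gcongr; exact hC x)

lemma nice_pdp (h : CylRep s g G) (hst : s ⊆ t) (i : ℤ) : Nice t (pdp i g) := by
  rw [show pdp i g = _ from funext (h.pdp_eq i)]
  exact h.nice_fderiv hst _

lemma nice_pdr (h : CylRep s g G) (hst : s ⊆ t) (i : ℤ) : Nice t (pdr i g) := by
  rw [show pdr i g = _ from funext (h.pdr_eq i)]
  exact h.nice_fderiv hst _

variable {V : ℝ → ℝ} {a b β : ℝ} {ν : Measure Om}

lemma nice_Yz (h : CylRep s g G) (hV : QuadPot V a b) (hst : s ⊆ t) {i j : ℤ} (hi : i ∈ t)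
    (hj : j ∈ t) : Nice t (Yz V i j g) :=
  ((Nice.mom hi).mul (h.nice_pdr hst j)).sub ((Nice.force hV hj).mul (h.nice_pdp hst i))

/-- Antisymmetry of `Y_{i,j}` with respect to the Gibbs measure, tested on the energy of the
site `k`, for which `Y_{i,j} E_k = p_i V'(r_j) (1_{j=k} - 1_{i=k})`. The two boundary terms
`β ∫ p_i V'(r_j) g E_k` produced by the integrations by parts in `r_j` and `p_i` cancel. -/
lemma integral_Yz_mul_energy (h : CylRep s g G) (hV : QuadPot V a b) (hβ : 0 < β)
    (hν : IsGibbs V β ν) (hst : s ⊆ t) {i j k : ℤ} (hi : i ∈ t) (hj : j ∈ t) (hk : k ∈ t) :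
    ∫ ω, Yz V i j g ω * ((ω.1 k) ^ 2 / 2 + V (ω.2 k)) ∂ν =
      ((if i = k then 1 else 0) - (if j = k then 1 else 0)) *
        ∫ ω, g ω * (ω.1 i * deriv V (ω.2 j)) ∂ν := by
  set E : Om → ℝ := fun ω => (ω.1 k) ^ 2 / 2 + V (ω.2 k) with hE
  set P : Om → ℝ := fun ω => ω.1 i
  set W : Om → ℝ := fun ω => deriv V (ω.2 j)
  set u : ℝ := if i = k then 1 else 0
  set w : ℝ := if j = k then 1 else 0
  have nE : Nice t E := Nice.energy hV hk
  have nP : Nice t P := Nice.mom hi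
  have nW : Nice t W := Nice.force hV hj
  have ng : Nice t g := h.nice hst
  have nr := h.nice_pdr hst j
  have np := h.nice_pdp hst i
  have hEr : ∀ ω : Om, HasDerivAt (fun x => E (ω.1, Function.update ω.2 j x)) (w * W ω) (ω.2 j) := by
    intro ω
    by_cases hjk : j = k
    · subst hjk
      simpa [hE, w, W] using ((hV.diff (ω.2 j)).hasDerivAt).const_add ((ω.1 j) ^ 2 / 2)
    · have hkj : k ≠ j := fun e => hjk e.symm
      simpa [hE, w, hjk, hkj] using hasDerivAt_const (ω.2 j) (E ω)
  have hEp : ∀ ω : Om, HasDerivAt (fun x => E (Function.update ω.1 i x, ω.2)) (u * P ω) (ω.1 i) := by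
    intro ω
    by_cases hik : i = k
    · subst hik
      have := (((hasDerivAt_id (ω.1 i)).pow 2).div_const 2).add_const (V (ω.2 i))
      simpa [hE, u, P] using this
    · have hki : k ≠ i := fun e => hik e.symm
      simpa [hE, u, hik, hki] using hasDerivAt_const (ω.1 i) (E ω)
  have h1 := ibp_pos hV hβ hν hj (F := fun ω => P ω * (g ω * E ω))
    (F' := fun ω => P ω * (pdr j g ω * E ω + g ω * (w * W ω)))
    (nP.mul (ng.mul nE)) (nP.mul ((nr.mul nE).add (ng.mul ((Nice.const w).mul nW))))
    (fun ω => by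
      have hg := h.hasDerivAt_pos j ω
      rw [← h.pdr_eq] at hg
      simpa [P] using (hg.mul (hEr ω)).const_mul (ω.1 i))
  have h2 := ibp_mom hV hβ hν hi (F := fun ω => W ω * (g ω * E ω))
    (F' := fun ω => W ω * (pdp i g ω * E ω + g ω * (u * P ω)))
    (nW.mul (ng.mul nE)) (nW.mul ((np.mul nE).add (ng.mul ((Nice.const u).mul nP))))
    (fun ω => by
      have hg := h.hasDerivAt_mom i ω
      rw [← h.pdp_eq] at hg
      simpa [W] using (hg.mul (hEp ω)).const_mul (deriv V (ω.2 j)))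
  have h12 : ∫ ω, P ω * (pdr j g ω * E ω + g ω * (w * W ω)) ∂ν =
      ∫ ω, W ω * (pdp i g ω * E ω + g ω * (u * P ω)) ∂ν := by
    rw [h1, h2]
    congr 1
    refine integral_congr_ae (Filter.Eventually.of_forall fun ω => ?_)
    simp only [P, W]
    ring
  have i1 := (nP.mul ((nr.mul nE).add (ng.mul ((Nice.const w).mul nW)))).integrable hV hβ hν
  have i2 := (nW.mul ((np.mul nE).add (ng.mul ((Nice.const u).mul nP)))).integrable hV hβ hν
  have i3 := ((Nice.const (u - w)).mul (ng.mul (nP.mul nW))).integrable hV hβ hν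
  calc ∫ ω, Yz V i j g ω * E ω ∂ν
      = ∫ ω, ((P ω * (pdr j g ω * E ω + g ω * (w * W ω)) -
          W ω * (pdp i g ω * E ω + g ω * (u * P ω))) + (u - w) * (g ω * (P ω * W ω))) ∂ν := by
        refine integral_congr_ae (Filter.Eventually.of_forall fun ω => ?_)
        simp only [Yz, P, W]
        ring
    _ = _ := by
        have i12 := i1.sub i2
        simp only [Pi.sub_def] at i12
        rw [integral_add i12 i3, integral_sub i1 i2, h12, sub_self, zero_add,
          integral_const_mul]

/-- The current `p_i V'(r_j)` is uncorrelated with functions not depending on the site `i`. -/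
lemma integral_current_eq_zero (h : CylRep s g G) (hV : QuadPot V a b) (hβ : 0 < β)
    (hν : IsGibbs V β ν) {i : ℤ} (hi : i ∉ s) (j : ℤ) :
    ∫ ω, g ω * (ω.1 i * deriv V (ω.2 j)) ∂ν = 0 := by
  set t : Finset ℤ := insert i (insert j s)
  have hst : s ⊆ t := (Finset.subset_insert _ _).trans (Finset.subset_insert _ _)
  have hit : i ∈ t := by simp [t]
  have hjt : j ∈ t := by simp [t]
  have := ibp_mom hV hβ hν hit (F := fun ω => g ω * deriv V (ω.2 j)) (F' := fun _ => 0)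
    ((h.nice hst).mul (Nice.force hV hjt)) (Nice.const 0)
    (fun ω => by
      have hg := h.hasDerivAt_mom i ω
      rw [← h.pdp_eq, h.pdp_eq_zero hi] at hg
      simpa using hg.mul_const (deriv V (ω.2 j)))
  simp only [integral_zero, eq_comm (a := (0 : ℝ)), mul_eq_zero, hβ.ne', false_or] at this
  rw [← this]
  refine integral_congr_ae (Filter.Eventually.of_forall fun ω => ?_)
  simp only
  ring

lemma Aop_eq_sum (h : CylRep s g G) {S : Finset ℤ} (hS : s ⊆ S)
    (hS' : s.image (fun i => i - 1) ⊆ S) (ω : Om) :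
    Aop V g ω = ∑ i ∈ S, (Xz V i g ω - Yz V i (i + 1) g ω) := by
  refine finsum_eq_sum_of_support_subset _ fun i hi => ?_
  by_contra hiS
  have h1 : i ∉ s := fun e => hiS (hS e)
  have h2 : i + 1 ∉ s := fun e => hiS (hS' (Finset.mem_image.2 ⟨i + 1, e, by ring⟩))
  exact hi (by simp [Xz, Yz, h.pdp_eq_zero h1, h.pdr_eq_zero h1, h.pdr_eq_zero h2])

/-- Integrated form of the local conservation of energy, `A E_k = p_k V'(r_{k+1}) -
p_{k-1} V'(r_k)`, combined with the antisymmetry of `A`. -/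
lemma integral_Aop_mul_energy (h : CylRep s g G) (hV : QuadPot V a b) (hβ : 0 < β)
    (hν : IsGibbs V β ν) (k : ℤ) :
    ∫ ω, Aop V g ω * ((ω.1 k) ^ 2 / 2 + V (ω.2 k)) ∂ν =
      ∫ ω, g ω * (ω.1 (k - 1) * deriv V (ω.2 k)) ∂ν -
        ∫ ω, g ω * (ω.1 k * deriv V (ω.2 (k + 1))) ∂ν := by
  -- `S` carries the nonzero terms of `A g` and the sites `k` and `k - 1`; `t` is the window on
  -- which every function involved is supported.
  set S : Finset ℤ := insert k (insert (k - 1) (s ∪ s.image (fun i => i - 1))) with hSdef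
  set t : Finset ℤ := S ∪ S.image (fun i => i + 1) with ht
  have hsS : s ⊆ S := fun i hi => by simp [hSdef, hi]
  have hsS' : s.image (fun i => i - 1) ⊆ S := fun i hi => by
    simp only [hSdef, Finset.mem_insert, Finset.mem_union, hi, or_true]
  have hSt : S ⊆ t := Finset.subset_union_left
  have hSt' : ∀ i ∈ S, i + 1 ∈ t := fun i hi =>
    Finset.mem_union_right _ (Finset.mem_image_of_mem _ hi)
  have hst : s ⊆ t := hsS.trans hSt
  have hkS : k ∈ S := by simp [hSdef]
  have hkS' : k - 1 ∈ S := by simp [hSdef]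
  have nX : ∀ i ∈ S, Nice t (Yz V i i g) := fun i hi => h.nice_Yz hV hst (hSt hi) (hSt hi)
  have nY : ∀ i ∈ S, Nice t (Yz V i (i + 1) g) := fun i hi =>
    h.nice_Yz hV hst (hSt hi) (hSt' i hi)
  have nE := Nice.energy hV (hSt hkS)
  have hterm : ∀ i ∈ S, ∫ ω, (Xz V i g ω - Yz V i (i + 1) g ω) *
      ((ω.1 k) ^ 2 / 2 + V (ω.2 k)) ∂ν =
      (if i = k - 1 then ∫ ω, g ω * (ω.1 i * deriv V (ω.2 (i + 1))) ∂ν else 0) -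
      (if i = k then ∫ ω, g ω * (ω.1 i * deriv V (ω.2 (i + 1))) ∂ν else 0) := by
    intro i hi
    simp only [Xz, sub_mul]
    rw [integral_sub (((nX i hi).mul nE).integrable hV hβ hν)
      (((nY i hi).mul nE).integrable hV hβ hν),
      h.integral_Yz_mul_energy hV hβ hν hst (hSt hi) (hSt hi) (hSt hkS),
      h.integral_Yz_mul_energy hV hβ hν hst (hSt hi) (hSt' i hi) (hSt hkS)]
    have : (i + 1 = k) = (i = k - 1) := propext (by omega)
    simp only [this, sub_self, zero_mul]
    split_ifs <;> ring
  simp only [h.Aop_eq_sum hsS hsS', Finset.sum_mul]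
  rw [integral_finsetSum _ fun i hi => by
      exact (((nX i hi).sub (nY i hi)).mul nE).integrable hV hβ hν,
    Finset.sum_congr rfl hterm, Finset.sum_sub_distrib, Finset.sum_ite_eq' S,
    Finset.sum_ite_eq' S, if_pos hkS, if_pos hkS', sub_add_cancel]

end CylRep

/-! ### The identity -/

/-- For every `g ∈ C`:
`Σ_i ∫ (τ_i g)·W^A_{0,1} dν_β = − Σ_i i ∫ (A g)·E_i dν_β`, where
`W^A_{0,1} = −p₀ V'(r₁)` and `E_i = p_i²/2 + V(r_i)`, both sums having only
finitely many nonvanishing terms. -/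
theorem current_vs_energy_pairing
    (V : ℝ → ℝ) (hV : ContDiff ℝ (⊤ : ℕ∞) V) (hV0 : V 0 = 0) (hdV0 : deriv V 0 = 0)
    (δm δp : ℝ) (hδm : 0 < δm) (hδmp : δm ≤ δp)
    (hVpp : ∀ r : ℝ, δm ≤ deriv (deriv V) r ∧ deriv (deriv V) r ≤ δp)
    (β : ℝ) (hβ : 0 < β) (ν : Measure Om) (hν : IsGibbs V β ν)
    (g : Om → ℝ) (hg : IsCyl ν g) :
    (Function.support fun i : ℤ =>
      ∫ ω, tauf i g ω * (-(ω.1 0 * deriv V (ω.2 1))) ∂ν).Finite ∧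
    (Function.support fun i : ℤ =>
      (i : ℝ) * ∫ ω, Aop V g ω * ((ω.1 i) ^ 2 / 2 + V (ω.2 i)) ∂ν).Finite ∧
    ∑ᶠ i : ℤ, ∫ ω, tauf i g ω * (-(ω.1 0 * deriv V (ω.2 1))) ∂ν =
      -∑ᶠ i : ℤ, (i : ℝ) * ∫ ω, Aop V g ω * ((ω.1 i) ^ 2 / 2 + V (ω.2 i)) ∂ν := by
  obtain ⟨s, G, h⟩ := hg.exists_rep
  have hQ : QuadPot V (δm / 2) δp := quadPot_of_bounds V hV hV0 hdV0 δm δp hδm hVpp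
  set J : ℤ → ℝ := fun k => ∫ ω, g ω * (ω.1 k * deriv V (ω.2 (k + 1))) ∂ν with hJ
  have hJs : ∀ k, k ∉ s → J k = 0 := fun k hk => h.integral_current_eq_zero hQ hβ hν hk _
  have hJfin : (Function.support J).Finite := s.finite_toSet.subset fun k hk => by
    by_contra hks
    exact hk (hJs k hks)
  have hL : ∀ i : ℤ, ∫ ω, tauf i g ω * (-(ω.1 0 * deriv V (ω.2 1))) ∂ν = -J (-i) := by
    intro i
    set t : Finset ℤ := insert (-i) (insert (-i + 1) s)
    have hst : s ⊆ t := (Finset.subset_insert _ _).trans (Finset.subset_insert _ _)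
    have hN : Nice t (fun ω => g ω * (-(ω.1 (-i) * deriv V (ω.2 (-i + 1))))) :=
      (h.nice hst).mul ((Nice.mom (by simp [t])).mul (Nice.force hQ (by simp [t]))).neg
    have := integral_tauf hQ hν hN i
    simp only [tauf, shiftc, neg_add_cancel, neg_add_cancel_comm] at this ⊢
    rw [this, hJ, ← integral_neg]
    simp only [mul_neg]
  have hR : ∀ i : ℤ, ∫ ω, Aop V g ω * ((ω.1 i) ^ 2 / 2 + V (ω.2 i)) ∂ν = J (i - 1) - J i := by
    intro i
    rw [h.integral_Aop_mul_energy hQ hβ hν i]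
    simp only [hJ, sub_add_cancel]
  simp only [hL, hR]
  have hshift : (Function.support fun i : ℤ => J (i - 1)).Finite :=
    hJfin.preimage (f := fun i : ℤ => i - 1) (sub_left_injective.injOn)
  have f1 : (Function.support fun i : ℤ => (i : ℝ) * J (i - 1)).Finite :=
    hshift.subset fun i hi => right_ne_zero_of_mul hi
  have f2 : (Function.support fun i : ℤ => (i : ℝ) * J i).Finite :=
    hJfin.subset fun i hi => right_ne_zero_of_mul hi
  have f3 : (Function.support fun i : ℤ => (i : ℝ) * (J (i - 1) - J i)).Finite := by
    simp only [mul_sub]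
    exact (f1.union f2).subset (Function.support_sub _ _)
  refine ⟨?_, f3, ?_⟩
  · refine (hJfin.preimage (f := fun i : ℤ => -i) neg_injective.injOn).subset fun i hi => ?_
    simpa using hi
  · -- Summation by parts: shift the index in the first half of `∑ i (J (i - 1) - J i)`.
    have e1 : ∑ᶠ i : ℤ, -J (-i) = -∑ᶠ i : ℤ, J i := by
      rw [finsum_neg_distrib]
      congr 1
      exact finsum_comp_equiv (Equiv.neg ℤ) (f := J)
    have e2 : ∑ᶠ i : ℤ, (i : ℝ) * J (i - 1) = ∑ᶠ i : ℤ, ((i : ℝ) * J i + J i) := by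
      rw [← finsum_comp_equiv (Equiv.addRight (1 : ℤ))]
      refine finsum_congr fun i => ?_
      simp
      ring
    rw [e1]
    simp only [mul_sub]
    rw [finsum_sub_distrib f1 f2, e2, finsum_add_distrib f2 hJfin]
    ring
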